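/- Let m ∈ ℝ and let P, Q be real polynomials with Q not identically zero such that p(y) = P(y)/Q(y) satisfies the Painlevé-II equation p''(y) - 2 p(y)³ - (2/3) y p(y) + (2/3) m = 0 at every y ∈ ℝ with Q(y) ≠ 0. Then y · p(y) → m as y → +∞ (i.e. the function y ↦ y · P(y)/Q(y) tends to m along the filter at infinity). -/

import Mathlib

open Polynomial in
noncomputable def p2W (P Q : Polynomial ℝ) : Polynomial ℝ :=
  derivative P * Q - P * derivative Q

open Polynomial in
noncomputable def p2N (P Q : Polynomial ℝ) : Polynomial ℝ :=
  derivative (p2W P Q) * Q - 2 * (p2W P Q) * derivative Q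

open Polynomial in
theorem p2W_deg (P Q : Polynomial ℝ) : (p2W P Q).natDegree ≤ P.natDegree + Q.natDegree := by
  have h1 := natDegree_derivative_le P
  have h2 := natDegree_derivative_le Q
  have h3 := natDegree_mul_le (p := derivative P) (q := Q)
  have h4 := natDegree_mul_le (p := P) (q := derivative Q)
  exact (natDegree_sub_le _ _).trans (max_le (by omega) (by omega))

open Polynomial in
theorem p2N_deg (P Q : Polynomial ℝ) :
    (p2N P Q).natDegree ≤ P.natDegree + 2 * Q.natDegree := by
  have h0 := p2W_deg P Q
  have h1 := natDegree_derivative_le (p2W P Q)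
  have h2 := natDegree_derivative_le Q
  have h3 := natDegree_mul_le (p := derivative (p2W P Q)) (q := Q)
  have h4 := natDegree_mul_le (p := 2 * p2W P Q) (q := derivative Q)
  have h5 := natDegree_mul_le (p := (2 : Polynomial ℝ)) (q := p2W P Q)
  have h6 : (2 : Polynomial ℝ).natDegree = 0 := natDegree_ofNat 2
  exact (natDegree_sub_le _ _).trans (max_le (by omega) (by omega))

open Polynomial in
theorem p2_deriv (P Q : Polynomial ℝ) (y : ℝ) (hy : Q.eval y ≠ 0) :
    deriv (deriv (fun t => P.eval t / Q.eval t)) y = (p2N P Q).eval y / (Q ^ 3).eval y := by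
  have h1 : deriv (fun t => P.eval t / Q.eval t) =ᶠ[nhds y]
      fun t => (p2W P Q).eval t / (Q.eval t) ^ 2 := by
    filter_upwards [Q.continuous.continuousAt.eventually_ne hy] with t ht
    rw [((P.hasDerivAt t).fun_div (Q.hasDerivAt t) ht).deriv]
    simp [p2W]
  rw [h1.deriv_eq, (((p2W P Q).hasDerivAt y).fun_div ((Q.hasDerivAt y).fun_pow 2)
    (pow_ne_zero 2 hy)).deriv]
  simp only [p2N, eval_sub, eval_mul, eval_pow, eval_ofNat]
  field_simp
  push_cast
  ring

open Polynomial in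
/-- If `p = P/Q` is a rational solution of the Painlevé-II equation with parameter `m`,
then `y · p(y) → m` as `y → +∞`. -/
theorem painleveII_rational_asymptotics (m : ℝ) (P Q : Polynomial ℝ) (hQ : Q ≠ 0)
    (h : ∀ y : ℝ, Q.eval y ≠ 0 →
      deriv (deriv (fun t => P.eval t / Q.eval t)) y -
          2 * (P.eval y / Q.eval y) ^ 3 - (2 / 3) * y * (P.eval y / Q.eval y) +
          (2 / 3) * m = 0) :
    Filter.Tendsto (fun y : ℝ => y * (P.eval y / Q.eval y)) Filter.atTop (nhds m) := by
  have hinf : {y : ℝ | Q.eval y ≠ 0}.Infinite := by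
    have : {y : ℝ | Q.eval y = 0}.Finite := by
      simpa [IsRoot] using Q.finite_setOf_isRoot hQ
    exact this.infinite_compl
  have hpoly : p2N P Q - C 2 * P ^ 3 - C (2/3) * (X * (P * Q ^ 2)) + C (2/3 * m) * Q ^ 3 = 0 := by
    apply eq_of_infinite_eval_eq
    refine hinf.mono fun y hy => ?_
    have hy' : Q.eval y ≠ 0 := hy
    have e := h y hy'
    rw [p2_deriv P Q y hy'] at e
    simp only [Set.mem_setOf_eq, eval_add, eval_sub, eval_mul, eval_pow, eval_C, eval_X, eval_zero]
    simp only [eval_pow] at e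
    field_simp at e
    linarith
  have hN := p2N_deg P Q
  have hb3 := natDegree_pow_le (p := Q) (n := 3)
  have ha3 := natDegree_pow_le (p := P) (n := 3)
  have hb2 := natDegree_pow_le (p := Q) (n := 2)
  have hPQ := natDegree_mul_le (p := P) (q := Q ^ 2)
  have hX := natDegree_mul_le (p := X) (q := P * Q ^ 2)
  have hX1 : (X : Polynomial ℝ).natDegree = 1 := natDegree_X
  have key : P.degree < Q.degree ∧ (p2N P Q).degree < (Q ^ 3).degree := by
    by_cases hP : P = 0
    · subst hP
      have : p2N 0 Q = 0 := by simp [p2N, p2W]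
      rw [this, degree_zero]
      exact ⟨bot_lt_iff_ne_bot.2 (by simpa using hQ),
        bot_lt_iff_ne_bot.2 (mt degree_eq_bot.1 (pow_ne_zero 3 hQ))⟩
    have hlt : P.natDegree < Q.natDegree := by
      by_contra hge
      rcases Nat.lt_or_ge Q.natDegree P.natDegree with hl | hl
      · have hc := congrArg (fun f => f.coeff (3 * P.natDegree)) hpoly
        simp only [coeff_add, coeff_sub, coeff_C_mul, coeff_zero] at hc
        rw [coeff_eq_zero_of_natDegree_lt (p := p2N P Q) (by omega),
          coeff_eq_zero_of_natDegree_lt (p := X * (P * Q ^ 2)) (by omega),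
          coeff_eq_zero_of_natDegree_lt (p := Q ^ 3) (by omega),
          ← natDegree_pow, coeff_natDegree, leadingCoeff_pow] at hc
        have : P.leadingCoeff ^ 3 ≠ 0 := pow_ne_zero _ (leadingCoeff_ne_zero.2 hP)
        apply this
        linarith
      · have hc := congrArg (fun f => f.coeff ((P * Q ^ 2).natDegree + 1)) hpoly
        have hd : (P * Q ^ 2).natDegree = P.natDegree + 2 * Q.natDegree := by
          rw [natDegree_mul hP (pow_ne_zero _ hQ), natDegree_pow]
        simp only [coeff_add, coeff_sub, coeff_C_mul, coeff_zero, coeff_X_mul] at hc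
        rw [coeff_eq_zero_of_natDegree_lt (p := p2N P Q) (by omega),
          coeff_eq_zero_of_natDegree_lt (p := P ^ 3) (by omega),
          coeff_eq_zero_of_natDegree_lt (p := Q ^ 3) (by omega),
          coeff_natDegree] at hc
        have : (P * Q ^ 2).leadingCoeff ≠ 0 :=
          leadingCoeff_ne_zero.2 (mul_ne_zero hP (pow_ne_zero _ hQ))
        apply this
        linarith
    exact ⟨degree_lt_degree hlt, degree_lt_degree (by rw [natDegree_pow]; omega)⟩
  have t1 := div_tendsto_zero_of_degree_lt P Q key.1
  have t2 := div_tendsto_zero_of_degree_lt (p2N P Q) (Q ^ 3) key.2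
  have t3 : Filter.Tendsto (fun y : ℝ => m + (3/2) * ((p2N P Q).eval y / (Q ^ 3).eval y
      - 2 * (P.eval y / Q.eval y) ^ 3)) Filter.atTop (nhds m) := by
    have := ((t2.sub ((t1.pow 3).const_mul 2)).const_mul (3/2)).const_add m
    simpa using this
  refine t3.congr' ?_
  have hev : ∀ᶠ y : ℝ in Filter.atTop, Q.eval y ≠ 0 := by
    simpa [IsRoot] using Q.eventually_no_roots hQ
  filter_upwards [hev] with y hy
  have e := h y hy
  rw [p2_deriv P Q y hy] at e
  linarith
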